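/- arXiv:2206.02154 — 3 statements merged into one kernel-verified Lean document; each statement's English description precedes it below -/
import Mathlib

section
/- Null space of the 1st level general fractional derivative: let (κ, k₁, k₂) ∈ L₁¹ and f ∈ C¹_{-1,(k₂)}(0,∞). Then ( 1L D_{(k₁,k₂)} f)(t) = 0 for all t > 0 if and only if there exists a constant C ∈ ℝ such that f(t) = C · (κ * k₁)(t) for all t > 0. -/
open Real Filter MeasureTheory intervalIntegral

/-- The Laplace convolution `(f * g)(t) = ∫_0^t f(t-τ) g(τ) dτ`. -/
noncomputable def lconv (f g : ℝ → ℝ) : ℝ → ℝ :=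
  fun t => ∫ τ in (0:ℝ)..t, f (t - τ) * g τ

/-- The space `C_{-1}(0,∞)`: functions representable as `t^p f₁(t)` with `p > -1`
and `f₁` continuous on `[0,∞)`. -/
def CMinusOne (f : ℝ → ℝ) : Prop :=
  ∃ p : ℝ, p > -1 ∧ ∃ f₁ : ℝ → ℝ, ContinuousOn f₁ (Set.Ici 0) ∧
    ∀ t > (0:ℝ), f t = t ^ p * f₁ t


/-- The class `L₁¹` of triples of 1st level kernels: `κ, k₁, k₂ ∈ C_{-1}(0,∞)` with
`(κ * k₁ * k₂)(t) = 1` for all `t > 0`. -/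
def FirstLevelKernels (κ k₁ k₂ : ℝ → ℝ) : Prop :=
  CMinusOne κ ∧ CMinusOne k₁ ∧ CMinusOne k₂ ∧ ∀ t > (0:ℝ), lconv κ (lconv k₁ k₂) t = 1


lemma beta_int {p q : ℝ} (hp : p > -1) (hq : q > -1) :
    IntervalIntegrable (fun s : ℝ => (1 - s) ^ p * s ^ q) volume 0 1 := by
  have h := (Complex.betaIntegral_convergent (u := ((q + 1 : ℝ) : ℂ)) (v := ((p + 1 : ℝ) : ℂ))
    (by simp; linarith) (by simp; linarith)).norm
  rw [intervalIntegrable_iff_integrableOn_Ioo_of_le zero_le_one] at h ⊢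
  refine h.congr_fun ?_ measurableSet_Ioo
  intro x hx
  have h1 : (1 - (x : ℂ)) = ((1 - x : ℝ) : ℂ) := by push_cast; rfl
  simp only [norm_mul, h1]
  rw [Complex.norm_cpow_eq_rpow_re_of_pos hx.1,
    Complex.norm_cpow_eq_rpow_re_of_pos (by linarith [hx.2])]
  simp [mul_comm]

/-- A representation with a globally continuous factor. -/
lemma CMinusOne.repr {f : ℝ → ℝ} (hf : CMinusOne f) :
    ∃ p : ℝ, p > -1 ∧ ∃ f₁ : ℝ → ℝ, Continuous f₁ ∧ ∀ t > (0:ℝ), f t = t ^ p * f₁ t := by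
  obtain ⟨p, hp, f₁, hc, h⟩ := hf
  refine ⟨p, hp, fun t => f₁ (max t 0), ?_, ?_⟩
  · exact hc.comp_continuous (by fun_prop) (fun x => Set.mem_Ici.2 (le_max_right _ _))
  · intro t ht
    simp only [max_eq_left ht.le, h t ht]

lemma CMinusOne.continuousOn {f : ℝ → ℝ} (hf : CMinusOne f) :
    ContinuousOn f (Set.Ioi 0) := by
  obtain ⟨p, hp, f₁, hc, h⟩ := hf.repr
  refine ContinuousOn.congr (f := fun t => t ^ p * f₁ t) ?_ (fun t ht => h t ht)
  refine ContinuousOn.mul ?_ hc.continuousOn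
  intro t ht
  exact (Real.continuousAt_rpow_const t p (Or.inl (ne_of_gt ht))).continuousWithinAt

lemma CMinusOne.abs {f : ℝ → ℝ} (hf : CMinusOne f) : CMinusOne (fun t => |f t|) := by
  obtain ⟨p, hp, f₁, hc, h⟩ := hf
  refine ⟨p, hp, fun t => |f₁ t|, hc.abs, fun t ht => ?_⟩
  simp only [h t ht, abs_mul, abs_of_pos (Real.rpow_pos_of_pos ht p)]

lemma CMinusOne.const_mul {f : ℝ → ℝ} (hf : CMinusOne f) (c : ℝ) :
    CMinusOne (fun t => c * f t) := by
  obtain ⟨p, hp, f₁, hc, h⟩ := hf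
  refine ⟨p, hp, fun t => c * f₁ t, hc.const_mul c, fun t ht => ?_⟩
  simp only [h t ht]; ring

lemma CMinusOne.const (c : ℝ) : CMinusOne (fun _ => c) :=
  ⟨0, by norm_num, fun _ => c, continuousOn_const, fun t _ => by simp⟩

lemma CMinusOne.intervalIntegrable {f : ℝ → ℝ} (hf : CMinusOne f) {t : ℝ} (ht : 0 < t) :
    IntervalIntegrable f volume 0 t := by
  obtain ⟨p, hp, f₁, hc, h⟩ := hf.repr
  have h1 : IntervalIntegrable (fun t => t ^ p * f₁ t) volume 0 t :=
    (intervalIntegral.intervalIntegrable_rpow' hp).mul_continuousOn hc.continuousOn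
  rw [intervalIntegrable_iff_integrableOn_Ioo_of_le ht.le] at h1 ⊢
  exact h1.congr_fun (fun x hx => (h x hx.1).symm) measurableSet_Ioo

/-- The scaled integrand. -/
lemma scaled_eq {f g a b : ℝ → ℝ} {p q : ℝ}
    (hf : ∀ t > (0:ℝ), f t = t ^ p * a t) (hg : ∀ t > (0:ℝ), g t = t ^ q * b t)
    {t s : ℝ} (ht : 0 < t) (hs : s ∈ Set.Ioo (0:ℝ) 1) :
    f (t - t * s) * g (t * s) =
      t ^ (p + q) * (((1 - s) ^ p * s ^ q) * (a (t - t * s) * b (t * s))) := by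
  have h1 : 0 < 1 - s := by linarith [hs.2]
  have h2 : t - t * s = t * (1 - s) := by ring
  rw [hf _ (by rw [h2]; positivity), hg _ (mul_pos ht hs.1)]
  nth_rewrite 1 [h2]
  rw [Real.mul_rpow ht.le h1.le, Real.mul_rpow ht.le hs.1.le, Real.rpow_add ht]
  ring

lemma lconv_scaled (f g : ℝ → ℝ) (t : ℝ) :
    lconv f g t = t * ∫ s in (0:ℝ)..1, f (t - t * s) * g (t * s) := by
  have := intervalIntegral.smul_integral_comp_mul_left (a := 0) (b := 1)
    (fun τ => f (t - τ) * g τ) t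
  simp only [mul_zero, mul_one, smul_eq_mul] at this
  rw [this]; rfl

lemma scaled_int {f g : ℝ → ℝ} (hf : CMinusOne f) (hg : CMinusOne g) {t : ℝ} (ht : 0 < t) :
    IntervalIntegrable (fun τ => f (t - τ) * g τ) volume 0 t := by
  obtain ⟨p, hp, a, ha, hfa⟩ := hf.repr
  obtain ⟨q, hq, b, hb, hgb⟩ := hg.repr
  have h : IntervalIntegrable (fun s => f (t - t * s) * g (t * s)) volume 0 1 := by
    have h1 : IntervalIntegrable (fun s : ℝ =>
        t ^ (p + q) * (((1 - s) ^ p * s ^ q) * (a (t - t * s) * b (t * s)))) volume 0 1 :=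
      ((beta_int hp hq).mul_continuousOn
        (Continuous.continuousOn (by fun_prop))).const_mul _
    rw [intervalIntegrable_iff_integrableOn_Ioo_of_le zero_le_one] at h1 ⊢
    exact h1.congr_fun (fun x hx => (scaled_eq hfa hgb ht hx).symm) measurableSet_Ioo
  have h2 := h.comp_mul_left (c := t⁻¹)
  simp only [zero_div, one_div, inv_inv, mul_inv_cancel_left₀ ht.ne'] at h2
  exact h2

lemma CMinusOne.lconv {f g : ℝ → ℝ} (hf : CMinusOne f) (hg : CMinusOne g) :
    CMinusOne (lconv f g) := by
  obtain ⟨p, hp, a, ha, hfa⟩ := hf.repr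
  obtain ⟨q, hq, b, hb, hgb⟩ := hg.repr
  refine ⟨p + q + 1, by linarith, fun t => ∫ s in (0:ℝ)..1,
    ((1 - s) ^ p * s ^ q) * (a (t - t * s) * b (t * s)), ?_, ?_⟩
  · apply Continuous.continuousOn
    rw [continuous_iff_continuousAt]
    intro t₀
    have hK : IsCompact (Set.Icc (t₀ - 1) (t₀ + 1) ×ˢ Set.Icc (0:ℝ) 1) :=
      isCompact_Icc.prod isCompact_Icc
    obtain ⟨M, hM⟩ := hK.exists_bound_of_continuousOn
      (f := fun x : ℝ × ℝ => a (x.1 - x.1 * x.2) * b (x.1 * x.2))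
      (Continuous.continuousOn (by fun_prop))
    have hB := beta_int hp hq
    refine intervalIntegral.continuousAt_of_dominated_interval
      (bound := fun s => ‖(1 - s) ^ p * s ^ q‖ * M) ?_ ?_ (hB.norm.mul_const M) ?_
    · refine Eventually.of_forall fun t => ?_
      have : IntervalIntegrable (fun s : ℝ =>
        (((1 - s) ^ p * s ^ q) * (a (t - t * s) * b (t * s)))) volume 0 1 :=
        hB.mul_continuousOn (Continuous.continuousOn (by fun_prop))
      exact this.def'.aestronglyMeasurable
    · filter_upwards [Icc_mem_nhds (show t₀ - 1 < t₀ by linarith) (show t₀ < t₀ + 1 by linarith)]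
        with t ht
      refine Eventually.of_forall fun s hs => ?_
      rw [Set.uIoc_of_le zero_le_one] at hs
      rw [norm_mul]
      exact mul_le_mul_of_nonneg_left (hM (t, s) ⟨ht, hs.1.le, hs.2⟩) (norm_nonneg _)
    · refine Eventually.of_forall fun s _ => ?_
      exact Continuous.continuousAt (by fun_prop)
  · intro t ht
    rw [lconv_scaled, Real.rpow_add_one ht.ne']
    have : ∫ s in (0:ℝ)..1, f (t - t * s) * g (t * s) = ∫ s in (0:ℝ)..1,
        t ^ (p + q) * (((1 - s) ^ p * s ^ q) * (a (t - t * s) * b (t * s))) := by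
      rw [intervalIntegral.integral_of_le zero_le_one, intervalIntegral.integral_of_le zero_le_one,
        integral_Ioc_eq_integral_Ioo, integral_Ioc_eq_integral_Ioo]
      exact setIntegral_congr_fun measurableSet_Ioo (fun s hs => scaled_eq hfa hgb ht hs)
    rw [this, intervalIntegral.integral_const_mul]
    ring

lemma lconv_congr {f f' g g' : ℝ → ℝ} (hf : ∀ t > (0:ℝ), f t = f' t)
    (hg : ∀ t > (0:ℝ), g t = g' t) : ∀ t > (0:ℝ), lconv f g t = lconv f' g' t := by
  intro t ht
  simp only [lconv]
  rw [intervalIntegral.integral_of_le ht.le, intervalIntegral.integral_of_le ht.le,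
    integral_Ioc_eq_integral_Ioo, integral_Ioc_eq_integral_Ioo]
  refine setIntegral_congr_fun measurableSet_Ioo (fun s hs => ?_)
  rw [hf _ (by linarith [hs.2]), hg _ hs.1]

lemma lconv_comm (f g : ℝ → ℝ) : lconv f g = lconv g f := by
  funext t
  have := intervalIntegral.integral_comp_sub_left (a := 0) (b := t)
    (fun τ => f (t - τ) * g τ) t
  simp only [sub_self, sub_zero, sub_sub_cancel] at this
  simp only [lconv]
  rw [← this]
  simp only [mul_comm]

noncomputable def posPart0 (f : ℝ → ℝ) : ℝ → ℝ := Set.indicator (Set.Ioi 0) f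

lemma posPart0_mul (f g : ℝ → ℝ) (t : ℝ) :
    (fun τ => (ContinuousLinearMap.mul ℝ ℝ) (posPart0 g τ) (posPart0 f (t - τ))) =
      Set.indicator (Set.Ioo 0 t) (fun τ => f (t - τ) * g τ) := by
  funext τ
  simp only [posPart0, ContinuousLinearMap.mul_apply', Set.indicator_apply, Set.mem_Ioi,
    Set.mem_Ioo, sub_pos]
  by_cases h1 : 0 < τ <;> by_cases h2 : τ < t <;> simp [h1, h2, mul_comm]

lemma posPart0_exists {f g : ℝ → ℝ} (hf : CMinusOne f) (hg : CMinusOne g) (t : ℝ) :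
    ConvolutionExistsAt (posPart0 g) (posPart0 f) t (ContinuousLinearMap.mul ℝ ℝ) volume := by
  unfold ConvolutionExistsAt
  rw [posPart0_mul, integrable_indicator_iff measurableSet_Ioo]
  rcases le_or_gt t 0 with ht | ht
  · simp [Set.Ioo_eq_empty_of_le ht]
  · exact (intervalIntegrable_iff_integrableOn_Ioo_of_le ht.le).1 (scaled_int hf hg ht)

lemma posPart0_conv (f g : ℝ → ℝ) :
    convolution (posPart0 g) (posPart0 f) (ContinuousLinearMap.mul ℝ ℝ) volume =
      posPart0 (lconv f g) := by
  funext t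
  unfold convolution
  rw [posPart0_mul, MeasureTheory.integral_indicator measurableSet_Ioo]
  rcases le_or_gt t 0 with ht | ht
  · simp [Set.Ioo_eq_empty_of_le ht, posPart0, ht]
  · rw [posPart0, Set.indicator_of_mem (show t ∈ Set.Ioi 0 from ht), lconv,
      intervalIntegral.integral_of_le ht.le, integral_Ioc_eq_integral_Ioo]

lemma posPart0_meas {f : ℝ → ℝ} (hf : CMinusOne f) :
    AEStronglyMeasurable (posPart0 f) volume := by
  rw [posPart0, aestronglyMeasurable_indicator_iff measurableSet_Ioi]
  exact hf.continuousOn.aestronglyMeasurable measurableSet_Ioi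

lemma posPart0_norm (f : ℝ → ℝ) : (fun x => ‖posPart0 f x‖) = posPart0 (fun x => |f x|) := by
  funext x
  simp only [posPart0, Set.indicator_apply]
  split_ifs <;> simp

lemma lconv_assoc {a b c : ℝ → ℝ} (ha : CMinusOne a) (hb : CMinusOne b) (hc : CMinusOne c) :
    ∀ t > (0:ℝ), lconv a (lconv b c) t = lconv (lconv a b) c t := by
  intro t ht
  have := convolution_assoc (μ := (volume : Measure ℝ)) (ν := (volume : Measure ℝ))
    (f := posPart0 c) (g := posPart0 b) (k := posPart0 a) (ContinuousLinearMap.mul ℝ ℝ)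
    (ContinuousLinearMap.mul ℝ ℝ) (ContinuousLinearMap.mul ℝ ℝ) (ContinuousLinearMap.mul ℝ ℝ)
    (fun x y z => by simp [mul_assoc]) (x₀ := t) (posPart0_meas hc) (posPart0_meas hb)
    (posPart0_meas ha) (Eventually.of_forall fun y => posPart0_exists hb hc y)
    (by
      rw [posPart0_norm, posPart0_norm]
      exact Eventually.of_forall fun y => posPart0_exists ha.abs hb.abs y)
    (by
      rw [posPart0_norm, posPart0_norm, posPart0_norm, posPart0_conv]
      exact posPart0_exists (ha.abs.lconv hb.abs) hc.abs t)
  rw [posPart0_conv, posPart0_conv, posPart0_conv, posPart0_conv] at this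
  simpa [posPart0, ht] using this

lemma lconv_one_inj {g h : ℝ → ℝ} (hg : CMinusOne g) (hh : CMinusOne h)
    (H : ∀ t > (0:ℝ), lconv (fun _ => 1) g t = lconv (fun _ => 1) h t) :
    ∀ t > (0:ℝ), g t = h t := by
  intro t ht
  have key : ∀ {u : ℝ → ℝ}, CMinusOne u → HasDerivAt (lconv (fun _ => 1) u) (u t) t := by
    intro u hu
    have e : lconv (fun _ => 1) u = fun x => ∫ τ in (0:ℝ)..x, u τ := by
      funext x; simp [lconv]
    rw [e]
    exact intervalIntegral.integral_hasDerivAt_right (hu.intervalIntegrable ht)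
      (hu.continuousOn.stronglyMeasurableAtFilter isOpen_Ioi t ht)
      (hu.continuousOn.continuousAt (Ioi_mem_nhds ht))
  refine (key hg).unique ((key hh).congr_of_eventuallyEq ?_)
  filter_upwards [Ioi_mem_nhds ht] with x hx using H x hx

lemma lconv_const (u : ℝ → ℝ) (c t : ℝ) :
    lconv u (fun _ => c) t = lconv (fun _ => 1) (fun x => c * u x) t := by
  rw [lconv_comm]; simp [lconv]

lemma lconv_zero (u : ℝ → ℝ) (t : ℝ) : lconv u (fun _ => 0) t = 0 := by simp [lconv]


/-- Null space of the 1st level GFD: for `(κ, k₁, k₂) ∈ L₁¹` and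
`f ∈ C¹_{-1,(k₂)}(0,∞)`, one has `( 1L D_{(k₁,k₂)} f)(t) = 0` for all `t > 0` if
and only if `f(t) = C (κ * k₁)(t)` for some constant `C ∈ ℝ` and all `t > 0`. -/
theorem null_space_1L_GFD (κ k₁ k₂ f : ℝ → ℝ)
    (hker : FirstLevelKernels κ k₁ k₂) (hf : CMinusOne f)
    (hdiff : ∀ t > (0:ℝ), DifferentiableAt ℝ (lconv k₂ f) t)
    (hlim : ∃ c : ℝ, Tendsto (lconv k₂ f) (nhdsWithin 0 (Set.Ioi 0)) (nhds c))
    (hder : CMinusOne (deriv (lconv k₂ f))) :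
    (∀ t > (0:ℝ), lconv k₁ (deriv (lconv k₂ f)) t = 0) ↔
      ∃ C : ℝ, ∀ t > (0:ℝ), f t = C * lconv κ k₁ t := by
  obtain ⟨hκ, h1, h2, hone⟩ := hker
  have h12 := h1.lconv h2
  have hκ1 := hκ.lconv h1
  have rfl' : ∀ {u : ℝ → ℝ}, ∀ t > (0:ℝ), u t = u t := fun _ _ => rfl
  -- (κ * k₁) * k₂ = 1
  have hone' : ∀ t > (0:ℝ), lconv (lconv κ k₁) k₂ t = 1 := fun t ht => by
    rw [← lconv_assoc hκ h1 h2 t ht, hone t ht]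
  constructor
  · intro H
    set g := deriv (lconv k₂ f) with hgdef
    have hg0 : ∀ t > (0:ℝ), g t = 0 := by
      refine lconv_one_inj hder (CMinusOne.const 0) (fun t ht => ?_)
      rw [lconv_zero, lconv_congr (fun t ht => (hone t ht).symm) rfl' t ht,
        ← lconv_assoc hκ h12 hder t ht, lconv_comm k₁ k₂,
        lconv_congr rfl' (fun s hs => (lconv_assoc h2 h1 hder s hs).symm) t ht,
        lconv_congr rfl' (lconv_congr rfl' H) t ht,
        lconv_congr rfl' (fun s _ => lconv_zero k₂ s) t ht, lconv_zero]
    obtain ⟨c, hc⟩ := isOpen_Ioi.exists_is_const_of_deriv_eq_zero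
      (s := Set.Ioi (0:ℝ)) (f := lconv k₂ f) isPreconnected_Ioi
      (fun t ht => (hdiff t ht).differentiableWithinAt) (fun t ht => hg0 t ht)
    refine ⟨c, lconv_one_inj hf (hκ1.const_mul c) (fun t ht => ?_)⟩
    rw [lconv_congr (fun t ht => (hone' t ht).symm) rfl' t ht,
      ← lconv_assoc hκ1 h2 hf t ht, lconv_congr rfl' (fun s hs => hc s hs) t ht, lconv_const]
  · rintro ⟨C, hC⟩
    have hconst : ∀ t > (0:ℝ), lconv k₂ f t = C := by
      intro t ht
      rw [lconv_congr rfl' hC t ht, lconv_comm]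
      have : lconv (fun t => C * lconv κ k₁ t) k₂ t = C * lconv (lconv κ k₁) k₂ t := by
        rw [lconv, lconv, ← intervalIntegral.integral_const_mul]
        simp only [mul_assoc]
      rw [this, hone' t ht, mul_one]
    have hg0 : ∀ t > (0:ℝ), deriv (lconv k₂ f) t = 0 := by
      intro t ht
      have : lconv k₂ f =ᶠ[nhds t] fun _ => C := by
        filter_upwards [Ioi_mem_nhds ht] with x hx using hconst x hx
      rw [this.deriv_eq, deriv_const]
    intro t ht
    rw [lconv_congr rfl' hg0 t ht, lconv_zero]
end

section
/- The tempered power law kernels form a Sonin pair from L₁: for 0 < α < 1 and ρ ≥ 0, the functions κ(t) = h_{α,ρ}(t) := t^{α−1} e^{−ρt}/Γ(α) and k(t) = h_{1−α,ρ}(t) + ρ ∫_0^t h_{1−α,ρ}(τ) dτ both belong to C_{-1}(0,∞) and satisfy the Sonin condition (κ * k)(t) = 1 for all t > 0. -/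
open Real Filter MeasureTheory intervalIntegral

/-- The class `L₁` of Sonin kernel pairs: `κ, k ∈ C_{-1}(0,∞)` with `(κ * k)(t) = 1`
for all `t > 0`. -/
def SoninPair (κ k : ℝ → ℝ) : Prop :=
  CMinusOne κ ∧ CMinusOne k ∧ ∀ t > (0:ℝ), lconv κ k t = 1


/-- The tempered power law kernel `h_{μ,ρ}(t) = t^{μ-1} e^{-ρt}/Γ(μ)`. -/
noncomputable def hpowTempered (μ ρ : ℝ) : ℝ → ℝ :=
  fun t => t ^ (μ - 1) * Real.exp (-ρ * t) / Real.Gamma μ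

theorem hpow_ii (μ ρ : ℝ) (hμ : 0 < μ) (a b : ℝ) :
    IntervalIntegrable (hpowTempered μ ρ) volume a b := by
  have h1 : IntervalIntegrable (fun t : ℝ => t ^ (μ - 1)) volume a b :=
    intervalIntegral.intervalIntegrable_rpow' (by linarith)
  have h2 : ContinuousOn (fun t : ℝ => Real.exp (-ρ * t)) (Set.uIcc a b) := by fun_prop
  exact (h1.mul_continuousOn h2).div_const _

theorem beta_conv (α : ℝ) (hα : 0 < α) (hα1 : α < 1) (t : ℝ) (ht : 0 < t) :
    ∫ τ in (0:ℝ)..t, (t - τ) ^ (α - 1) * τ ^ ((1 - α) - 1)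
      = Real.Gamma α * Real.Gamma (1 - α) := by
  have h := Complex.betaIntegral_scaled ((1 - α : ℝ) : ℂ) (α : ℂ) ht
  have h2 := Complex.Gamma_mul_Gamma_eq_betaIntegral (s := ((1 - α : ℝ) : ℂ)) (t := (α : ℂ))
    (by simp; linarith) (by simpa using hα)
  have e : ((1 - α : ℝ) : ℂ) + (α : ℂ) = 1 := by push_cast; ring
  rw [e] at h h2
  simp only [Complex.Gamma_one, one_mul, sub_self, Complex.cpow_zero] at h h2
  rw [← h2, Complex.Gamma_ofReal, Complex.Gamma_ofReal] at h
  have h3 : ((∫ τ in (0:ℝ)..t, (t - τ) ^ (α - 1) * τ ^ ((1 - α) - 1) : ℝ) : ℂ)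
      = ((Real.Gamma α * Real.Gamma (1 - α) : ℝ) : ℂ) := by
    rw [← intervalIntegral.integral_ofReal]
    push_cast at h ⊢
    rw [mul_comm (Real.Gamma α : ℂ), ← h]
    apply intervalIntegral.integral_congr
    intro x hx
    rw [Set.uIcc_of_le ht.le] at hx
    simp only
    rw [Complex.ofReal_cpow (by linarith [hx.2]), Complex.ofReal_cpow hx.1, mul_comm]
    push_cast
    rfl
  exact_mod_cast h3

theorem hconv (α ρ : ℝ) (hα : 0 < α) (hα1 : α < 1) (t : ℝ) (ht : 0 < t) :
    ∫ τ in (0:ℝ)..t, hpowTempered α ρ (t - τ) * hpowTempered (1 - α) ρ τ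
      = Real.exp (-ρ * t) := by
  have g1 := (Real.Gamma_pos_of_pos hα).ne'
  have g2 := (Real.Gamma_pos_of_pos (show 0 < 1 - α by linarith)).ne'
  have : ∀ τ, hpowTempered α ρ (t - τ) * hpowTempered (1 - α) ρ τ =
      (Real.exp (-ρ * t) / (Real.Gamma α * Real.Gamma (1 - α))) *
        ((t - τ) ^ (α - 1) * τ ^ ((1 - α) - 1)) := by
    intro τ
    have e : Real.exp (-ρ * t) = Real.exp (-ρ * (t - τ)) * Real.exp (-ρ * τ) := by
      rw [← Real.exp_add]; ring_nf
    unfold hpowTempered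
    rw [e]
    field_simp
  simp_rw [this]
  rw [intervalIntegral.integral_const_mul, beta_conv α hα hα1 t ht]
  field_simp

theorem fub (f g : ℝ → ℝ) (hf : ∀ a b, IntervalIntegrable f volume a b)
    (hg : ∀ a b, IntervalIntegrable g volume a b) (t : ℝ) (ht : 0 < t) :
    ∫ τ in (0:ℝ)..t, f (t - τ) * ∫ s in (0:ℝ)..τ, g s
      = ∫ v in (0:ℝ)..t, ∫ τ in (0:ℝ)..v, f (v - τ) * g τ := by
  set F := (Set.Ioc 0 t).indicator f with hF
  set G := (Set.Ioc 0 t).indicator g with hG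
  have iF : Integrable F := by
    rw [hF, integrable_indicator_iff measurableSet_Ioc]
    exact (intervalIntegrable_iff_integrableOn_Ioc_of_le ht.le).1 (hf 0 t)
  have iG : Integrable G := by
    rw [hG, integrable_indicator_iff measurableSet_Ioc]
    exact (intervalIntegrable_iff_integrableOn_Ioc_of_le ht.le).1 (hg 0 t)
  have iP : Integrable (fun p : ℝ × ℝ => F p.2 * G (p.1 - p.2)) (volume.prod volume) :=
    iF.convolution_integrand (ContinuousLinearMap.mul ℝ ℝ) iG
  have iP2 : Integrable (Function.uncurry fun v σ => F σ * G (v - σ))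
      ((volume.restrict (Set.Ioc 0 t)).prod volume) := by
    refine iP.mono_measure ?_
    exact Measure.prod_mono Measure.restrict_le_self le_rfl
  have sw := integral_integral_swap iP2
  have L : ∫ τ in (0:ℝ)..t, f (t - τ) * ∫ s in (0:ℝ)..τ, g s
      = ∫ σ, ∫ v in Set.Ioc 0 t, F σ * G (v - σ) := by
    have := intervalIntegral.integral_comp_sub_left
      (fun σ => f σ * ∫ s in (0:ℝ)..(t - σ), g s) (a := 0) (b := t) t
    simp only [sub_sub_cancel, sub_self, sub_zero] at this
    rw [this, intervalIntegral.integral_of_le ht.le, ← MeasureTheory.integral_indicator measurableSet_Ioc]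
    congr 1
    ext σ
    rw [MeasureTheory.integral_const_mul]
    by_cases hs : σ ∈ Set.Ioc 0 t
    · rw [Set.indicator_of_mem hs, hF, Set.indicator_of_mem hs]
      congr 1
      rw [← intervalIntegral.integral_of_le ht.le, intervalIntegral.integral_comp_sub_right G σ,
        ← intervalIntegral.integral_add_adjacent_intervals (b := 0)
          iG.intervalIntegrable iG.intervalIntegrable]
      have z : ∫ x in (0 - σ)..0, G x = 0 := by
        rw [intervalIntegral.integral_congr (g := fun _ => 0)]
        · simp
        · intro x hx
          rw [Set.uIcc_of_le (by linarith [hs.1])] at hx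
          exact Set.indicator_of_notMem (fun h => absurd h.1 (not_lt.2 hx.2)) _
      rw [z, zero_add, intervalIntegral.integral_of_le (by linarith [hs.2]),
        intervalIntegral.integral_of_le (by linarith [hs.2])]
      apply setIntegral_congr_fun measurableSet_Ioc
      intro x hx
      have hm : x ∈ Set.Ioc 0 t := ⟨hx.1, by linarith [hx.2, hs.1]⟩
      exact (Set.indicator_of_mem hm g).symm
    · rw [Set.indicator_of_notMem hs, hF, Set.indicator_of_notMem hs, zero_mul]
  rw [L, ← sw, intervalIntegral.integral_of_le ht.le]
  apply setIntegral_congr_fun measurableSet_Ioc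
  intro v hv
  have := intervalIntegral.integral_comp_sub_left
      (fun σ => f σ * g (v - σ)) (a := 0) (b := v) v
  simp only [sub_sub_cancel, sub_self, sub_zero] at this
  simp only
  rw [this, intervalIntegral.integral_of_le hv.1.le, integral_Ioc_eq_integral_Ioo,
    ← MeasureTheory.integral_indicator measurableSet_Ioo]
  congr 1
  ext σ
  have hv2 := hv.2
  by_cases hs : σ ∈ Set.Ioo 0 v
  · rw [Set.indicator_of_mem hs, hF, hG, Set.indicator_of_mem, Set.indicator_of_mem]
    · exact ⟨by linarith [hs.2], by linarith [hs.1]⟩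
    · exact ⟨hs.1, by linarith [hs.2]⟩
  · rw [Set.indicator_of_notMem hs]
    by_cases h0 : 0 < σ
    · have : v ≤ σ := by
        by_contra h; exact hs ⟨h0, not_le.1 h⟩
      rw [hG, Set.indicator_of_notMem (fun h => by linarith [h.1]), mul_zero]
    · rw [hF, Set.indicator_of_notMem (fun h => h0 h.1), zero_mul]

/-- The tempered power law kernels form a Sonin pair from `L₁`: for `0 < α < 1`
and `ρ ≥ 0`, the functions `κ(t) = h_{α,ρ}(t)` and
`k(t) = h_{1−α,ρ}(t) + ρ ∫_0^t h_{1−α,ρ}(τ) dτ` both belong to `C_{-1}(0,∞)` and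
satisfy the Sonin condition `(κ * k)(t) = 1` for all `t > 0`. -/
theorem tempered_power_law_sonin_pair (α ρ : ℝ) (hα : 0 < α) (hα1 : α < 1)
    (hρ : 0 ≤ ρ) :
    SoninPair (hpowTempered α ρ)
      (fun t => hpowTempered (1 - α) ρ t +
        ρ * ∫ τ in (0:ℝ)..t, hpowTempered (1 - α) ρ τ) := by
  have hβ : 0 < 1 - α := by linarith
  have hc : Continuous fun t => ∫ τ in (0:ℝ)..t, hpowTempered (1 - α) ρ τ :=
    intervalIntegral.continuous_primitive (hpow_ii (1 - α) ρ hβ) 0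
  refine ⟨⟨α - 1, by linarith, fun t => Real.exp (-ρ * t) / Real.Gamma α, ?_, ?_⟩,
    ⟨(1 - α) - 1, by linarith, fun t => Real.exp (-ρ * t) / Real.Gamma (1 - α) +
      t ^ α * (ρ * ∫ τ in (0:ℝ)..t, hpowTempered (1 - α) ρ τ), ?_, ?_⟩, ?_⟩
  · fun_prop
  · intro t ht
    simp only [hpowTempered]; ring
  · have h1 : Continuous fun t : ℝ => t ^ α := Real.continuous_rpow_const hα.le
    exact ((Continuous.div_const (by fun_prop) _).add
      (h1.mul (continuous_const.mul hc))).continuousOn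
  · intro t ht
    have e : t ^ ((1 - α) - 1) * t ^ α = 1 := by
      rw [← Real.rpow_add ht]; simp
    rw [mul_add, ← mul_assoc, e, one_mul]
    congr 1
    simp only [hpowTempered]; ring
  · intro t ht
    have c1 := hconv α ρ hα hα1 t ht
    have i1 : IntervalIntegrable
        (fun τ => hpowTempered α ρ (t - τ) * hpowTempered (1 - α) ρ τ) volume 0 t := by
      by_contra h
      rw [intervalIntegral.integral_undef h] at c1
      exact (Real.exp_pos _).ne c1
    have i2 : IntervalIntegrable (fun τ => hpowTempered α ρ (t - τ) *
        ∫ s in (0:ℝ)..τ, hpowTempered (1 - α) ρ s) volume 0 t := by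
      have := (hpow_ii α ρ hα t 0).comp_sub_left t
      simp only [sub_self, sub_zero] at this
      exact this.mul_continuousOn hc.continuousOn
    have c2 : ∫ τ in (0:ℝ)..t, hpowTempered α ρ (t - τ) *
        ∫ s in (0:ℝ)..τ, hpowTempered (1 - α) ρ s = ∫ v in (0:ℝ)..t, Real.exp (-ρ * v) := by
      rw [fub _ _ (hpow_ii α ρ hα) (hpow_ii (1 - α) ρ hβ) t ht,
        intervalIntegral.integral_of_le ht.le, intervalIntegral.integral_of_le ht.le]
      exact setIntegral_congr_fun measurableSet_Ioc fun v hv => hconv α ρ hα hα1 v hv.1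
    have c3 : ρ * ∫ v in (0:ℝ)..t, Real.exp (-ρ * v) = 1 - Real.exp (-ρ * t) := by
      rw [← intervalIntegral.integral_const_mul]
      rw [intervalIntegral.integral_eq_sub_of_hasDerivAt (f := fun v => -Real.exp (-ρ * v))]
      · simp; ring
      · intro x _
        have := (((hasDerivAt_id x).const_mul (-ρ)).exp).neg
        refine HasDerivAt.congr_deriv (f := fun v => -Real.exp (-ρ * v)) this ?_
        simp only [id]; ring
      · exact Continuous.intervalIntegrable (by fun_prop) _ _
    have : ∀ τ, hpowTempered α ρ (t - τ) * (hpowTempered (1 - α) ρ τ +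
        ρ * ∫ s in (0:ℝ)..τ, hpowTempered (1 - α) ρ s) =
        hpowTempered α ρ (t - τ) * hpowTempered (1 - α) ρ τ +
        ρ * (hpowTempered α ρ (t - τ) * ∫ s in (0:ℝ)..τ, hpowTempered (1 - α) ρ s) := by
      intro τ; ring
    simp only [lconv]
    simp_rw [this]
    rw [intervalIntegral.integral_add i1 (i2.const_mul ρ), intervalIntegral.integral_const_mul,
      c1, c2, c3]
    ring
end

section
/- The Mittag-Leffler kernels form a Sonin pair from L₁: for 0 < α < β < 1, the functions κ(t) = h_{1−β+α}(t) + h_{1−β}(t) and k(t) = t^{β−1} E_{α,β}(−t^α) both belong to C_{-1}(0,∞) and satisfy the Sonin condition (κ * k)(t) = 1 for all t > 0. -/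
open Real Filter MeasureTheory intervalIntegral

/-- The power law kernel `h_μ(t) = t^{μ-1}/Γ(μ)`. -/
noncomputable def hpow (μ : ℝ) : ℝ → ℝ := fun t => t ^ (μ - 1) / Real.Gamma μ

/-- The two-parameter Mittag-Leffler function
`E_{α,β}(z) = Σ_{n=0}^∞ z^n / Γ(αn + β)`. -/
noncomputable def mittagLeffler (α β : ℝ) (z : ℝ) : ℝ :=
  ∑' n : ℕ, z ^ n / Real.Gamma (α * n + β)

lemma gamma_lower (R s : ℝ) (hR : 1 ≤ R) (hs : 0 < s) :
    R ^ s * (Real.exp (-(R + 1)) / (R + 1)) ≤ Real.Gamma s := by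
  rw [Real.Gamma_eq_integral hs]
  have hint := Real.GammaIntegral_convergent hs
  have hsub : Set.Ioc R (R+1) ⊆ Set.Ioi 0 := fun x hx => lt_trans (by linarith) hx.1
  calc R ^ s * (Real.exp (-(R + 1)) / (R + 1))
      = ∫ x in Set.Ioc R (R+1), R ^ s * (Real.exp (-(R + 1)) / (R + 1)) := by
        simp
    _ ≤ ∫ x in Set.Ioc R (R+1), Real.exp (-x) * x ^ (s - 1) := by
        apply setIntegral_mono_on _ (hint.mono_set hsub) measurableSet_Ioc
        · intro x hx
          have hx0 : 0 < x := hsub hx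
          rw [Real.rpow_sub_one hx0.ne']
          calc R ^ s * (Real.exp (-(R + 1)) / (R + 1)) 
              = Real.exp (-(R + 1)) * (R ^ s / (R + 1)) := by ring
            _ ≤ _ := by
              have := hx.1
              have := hx.2
              gcongr
        · exact integrableOn_const (by simp)
    _ ≤ _ := by
        apply setIntegral_mono_set hint
        · filter_upwards [ae_restrict_mem measurableSet_Ioi] with x hx
          have : 0 < x := hx
          simp only [Pi.zero_apply]; positivity
        · exact hsub.eventuallyLE

lemma ml_summable (α β : ℝ) (hα : 0 < α) (hβ : 0 < β) (x : ℝ) (hx : 0 ≤ x) :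
    Summable (fun n : ℕ => x ^ n / Real.Gamma (α * n + β)) := by
  obtain ⟨R, hR1, hR⟩ : ∃ R : ℝ, 1 ≤ R ∧ 2 * x ≤ R ^ α := by
    have h := (tendsto_rpow_atTop hα).eventually_ge_atTop (2 * x)
    obtain ⟨R, h1, h2⟩ := (h.and (eventually_ge_atTop 1)).exists
    exact ⟨R, h2, h1⟩
  have hR0 : 0 < R := by linarith
  set D := R ^ β * (Real.exp (-(R + 1)) / (R + 1)) with hD
  have hDpos : 0 < D := by positivity
  refine Summable.of_nonneg_of_le (fun n => ?_) (fun n => ?_)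
    ((summable_geometric_of_lt_one (by norm_num : (0:ℝ) ≤ 1/2) (by norm_num)).mul_right D⁻¹)
  · have : 0 < Real.Gamma (α * n + β) := Real.Gamma_pos_of_pos (by positivity)
    positivity
  · have h1 := gamma_lower R (α * n + β) hR1 (by positivity)
    have h2 : 0 < Real.Gamma (α * n + β) := Real.Gamma_pos_of_pos (by positivity)
    rw [Real.rpow_add hR0, Real.rpow_mul hR0.le, Real.rpow_natCast, mul_assoc] at h1
    rw [div_le_iff₀ h2]
    have h3 : (2 * x) ^ n ≤ (R ^ α) ^ n := by gcongr
    calc x ^ n = (1/2) ^ n * D⁻¹ * ((2 * x) ^ n * D) := by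
          field_simp
          rw [← mul_pow]; congr 1; ring
      _ ≤ _ := by
          gcongr
          refine le_trans ?_ h1
          gcongr

lemma ml_continuous (α β : ℝ) (hα : 0 < α) (hβ : 0 < β) :
    Continuous (mittagLeffler α β) := by
  rw [continuous_iff_continuousAt]
  intro z
  have h : ContinuousOn (mittagLeffler α β) (Metric.ball 0 (|z| + 1)) := by
    refine continuousOn_tsum (u := fun n : ℕ => (|z| + 1) ^ n / Real.Gamma (α * n + β)) ?_
      (ml_summable α β hα hβ _ (by positivity)) ?_
    · intro n; fun_prop
    · intro n x hx
      have h2 : 0 < Real.Gamma (α * n + β) := Real.Gamma_pos_of_pos (by positivity)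
      rw [norm_div, norm_pow, Real.norm_of_nonneg h2.le]
      have : ‖x‖ ≤ |z| + 1 := by simpa using (Metric.mem_ball.1 hx).le
      gcongr
  exact h.continuousAt (Metric.isOpen_ball.mem_nhds (by simp))

lemma hpow_conv (a b t : ℝ) (ha : 0 < a) (hb : 0 < b) (ht : 0 < t) :
    ∫ τ in (0:ℝ)..t, hpow a (t - τ) * hpow b τ = hpow (a + b) t := by
  have h := Complex.betaIntegral_scaled (b : ℂ) (a : ℂ) ht
  rw [Complex.betaIntegral_eq_Gamma_mul_div _ _ (by simpa) (by simpa)] at h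
  have h1 : ∫ τ in (0:ℝ)..t, τ ^ (b - 1) * (t - τ) ^ (a - 1)
      = t ^ (b + a - 1) * (Real.Gamma b * Real.Gamma a / Real.Gamma (b + a)) := by
    apply Complex.ofReal_injective
    rw [← intervalIntegral.integral_ofReal]
    push_cast
    rw [Complex.ofReal_cpow ht.le, ← Complex.Gamma_ofReal, ← Complex.Gamma_ofReal,
      ← Complex.Gamma_ofReal]
    push_cast
    rw [← h]
    apply intervalIntegral.integral_congr
    intro x hx
    rw [Set.uIcc_of_le ht.le] at hx
    simp only
    rw [Complex.ofReal_cpow hx.1, Complex.ofReal_cpow (by linarith [hx.2])]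
    push_cast
    rfl
  have hga := (Real.Gamma_pos_of_pos ha).ne'
  have hgb := (Real.Gamma_pos_of_pos hb).ne'
  calc _ = ∫ τ in (0:ℝ)..t, (Real.Gamma a * Real.Gamma b)⁻¹ * (τ ^ (b - 1) * (t - τ) ^ (a - 1)) := by
        congr 1; ext τ; simp only [hpow]; field_simp
    _ = _ := by
        rw [intervalIntegral.integral_const_mul, h1, hpow, add_comm a b]
        field_simp

lemma hpow_conv_int (a b t : ℝ) (ha : 0 < a) (hb : 0 < b) (ht : 0 < t) :
    IntervalIntegrable (fun τ => hpow a (t - τ) * hpow b τ) volume 0 t := by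
  by_contra hc
  have h := hpow_conv a b t ha hb ht
  rw [intervalIntegral.integral_undef hc] at h
  have : 0 < hpow (a + b) t := by
    have := Real.Gamma_pos_of_pos (add_pos ha hb)
    unfold hpow; positivity
  linarith

lemma hpow_term (α b t : ℝ) (ht : 0 < t) (n : ℕ) :
    hpow (α * n + b) t = t ^ (b - 1) * ((t ^ α) ^ n / Real.Gamma (α * n + b)) := by
  rw [hpow, add_sub_assoc, Real.rpow_add ht, Real.rpow_mul ht.le, Real.rpow_natCast]
  ring

lemma ml_conv (α β μ t : ℝ) (hα : 0 < α) (hβ : 0 < β) (hμ : 0 < μ) (ht : 0 < t) :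
    IntervalIntegrable (fun τ => hpow μ (t - τ) * (τ ^ (β - 1) * mittagLeffler α β (-(τ ^ α))))
      volume 0 t ∧
    HasSum (fun n : ℕ => (-1) ^ n * hpow (α * n + (μ + β)) t)
      (∫ τ in (0:ℝ)..t, hpow μ (t - τ) * (τ ^ (β - 1) * mittagLeffler α β (-(τ ^ α)))) := by
  have hpos : ∀ n : ℕ, 0 < α * n + β := fun n => by positivity
  have hint : ∀ n : ℕ, Integrable (fun τ => (-1) ^ n * (hpow μ (t - τ) * hpow (α * n + β) τ))
      (volume.restrict (Set.Ioc 0 t)) := fun n =>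
    (((intervalIntegrable_iff_integrableOn_Ioc_of_le ht.le).1
      (hpow_conv_int μ (α * n + β) t hμ (hpos n) ht)).integrable).const_mul _
  have hsum : Summable (fun n : ℕ => hpow (α * n + (μ + β)) t) := by
    simp_rw [hpow_term α (μ + β) t ht]
    exact (ml_summable α (μ + β) hα (by positivity) _ (by positivity)).mul_left _
  have hc : ∀ n : ℕ, ∫ τ in Set.Ioc 0 t, hpow μ (t - τ) * hpow (α * n + β) τ
      = hpow (α * n + (μ + β)) t := fun n => by
    rw [← intervalIntegral.integral_of_le ht.le, hpow_conv μ _ t hμ (hpos n) ht]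
    congr 1; ring
  have hnorm : ∀ n : ℕ, ∫ τ in Set.Ioc 0 t,
      ‖(-1) ^ n * (hpow μ (t - τ) * hpow (α * n + β) τ)‖ = hpow (α * n + (μ + β)) t := fun n => by
    rw [← hc n]
    apply setIntegral_congr_fun measurableSet_Ioc
    intro x hx
    have h1 := Real.Gamma_pos_of_pos hμ
    have h2 := Real.Gamma_pos_of_pos (hpos n)
    have h3 : 0 ≤ t - x := by linarith [hx.2]
    have h4 := hx.1
    have h5 : 0 ≤ hpow μ (t - x) * hpow (α * n + β) x := by unfold hpow; positivity
    simp only [norm_mul, norm_pow, norm_neg, norm_one, one_pow, one_mul]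
    rw [← norm_mul, Real.norm_of_nonneg h5]
  have heq : ∀ τ ∈ Set.Ioc 0 t, ∑' n : ℕ, (-1) ^ n * (hpow μ (t - τ) * hpow (α * n + β) τ)
      = hpow μ (t - τ) * (τ ^ (β - 1) * mittagLeffler α β (-(τ ^ α))) := by
    intro τ hτ
    rw [mittagLeffler, ← tsum_mul_left, ← tsum_mul_left]
    congr 1; ext n
    rw [hpow_term α β τ hτ.1, neg_pow]
    ring
  have key := hasSum_integral_of_summable_integral_norm hint (by simpa only [hnorm] using hsum)
  rw [setIntegral_congr_fun measurableSet_Ioc heq] at key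
  simp only [MeasureTheory.integral_const_mul, hc] at key
  rw [intervalIntegral.integral_of_le ht.le]
  refine ⟨?_, key⟩
  have h0 := hpow_conv_int μ β t hμ hβ ht
  have hE : Continuous (fun τ : ℝ => Real.Gamma β * mittagLeffler α β (-(τ ^ α))) :=
    continuous_const.mul ((ml_continuous α β hα hβ).comp
      (Real.continuous_rpow_const hα.le).neg)
  refine (h0.mul_continuousOn hE.continuousOn).congr ?_
  intro τ _
  have hg := (Real.Gamma_pos_of_pos hβ).ne'
  simp only [hpow]
  field_simp

/-- The Mittag-Leffler kernels form a Sonin pair from `L₁`: for `0 < α < β < 1`,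
the functions `κ(t) = h_{1−β+α}(t) + h_{1−β}(t)` and `k(t) = t^{β−1} E_{α,β}(−t^α)`
both belong to `C_{-1}(0,∞)` and satisfy the Sonin condition `(κ * k)(t) = 1`
for all `t > 0`. -/
theorem mittag_leffler_sonin_pair (α β : ℝ) (hα : 0 < α) (hαβ : α < β)
    (hβ : β < 1) :
    SoninPair (fun t => hpow (1 - β + α) t + hpow (1 - β) t)
      (fun t => t ^ (β - 1) * mittagLeffler α β (-(t ^ α))) := by
  have hβ0 : 0 < β := hα.trans hαβ
  refine ⟨⟨-β, by linarith, fun t => t ^ α / Real.Gamma (1 - β + α) + 1 / Real.Gamma (1 - β),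
    ?_, ?_⟩, ⟨β - 1, by linarith, fun t => mittagLeffler α β (-(t ^ α)), ?_, fun t _ => rfl⟩, ?_⟩
  · exact (((Real.continuous_rpow_const hα.le).div_const _).add continuous_const).continuousOn
  · intro t ht
    have h1 : 1 - β + α - 1 = -β + α := by ring
    have h2 : 1 - β - 1 = -β := by ring
    simp only [hpow, h1, h2]
    rw [Real.rpow_add ht]
    ring
  · exact ((ml_continuous α β hα hβ0).comp
      (Real.continuous_rpow_const hα.le).neg).continuousOn
  · intro t ht
    obtain ⟨i1, s1⟩ := ml_conv α β (1 - β + α) t hα hβ0 (by linarith) ht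
    obtain ⟨i2, s2⟩ := ml_conv α β (1 - β) t hα hβ0 (by linarith) ht
    have s2' := (hasSum_nat_add_iff' 1).2 s2
    have e : (fun n : ℕ => (-1 : ℝ) ^ n * hpow (α * n + (1 - β + α + β)) t)
        = fun n : ℕ => -((-1 : ℝ) ^ (n + 1) * hpow (α * ((n + 1 : ℕ) : ℝ) + (1 - β + β)) t) := by
      ext n
      have : α * ((n + 1 : ℕ) : ℝ) + (1 - β + β) = α * n + (1 - β + α + β) := by
        push_cast; ring
      rw [this]; ring
    rw [e] at s1
    have hu := s1.unique s2'.neg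
    have hz : hpow 1 t = 1 := by simp [hpow]
    simp only [Finset.range_one, Finset.sum_singleton, pow_zero, one_mul, Nat.cast_zero, mul_zero,
      zero_add, sub_add_cancel, hz] at hu
    simp only [lconv, add_mul]
    rw [intervalIntegral.integral_add i1 i2, hu]
    ring
end
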